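/- arXiv:2510.25171 — 7 statements merged into one kernel-verified Lean document; each statement's English description precedes it below -/
import Mathlib

section
/- Let n ≥ 1 and let φ : ℝⁿ → ℝ be positively 1-homogeneous, subadditive, with φ(y) > 0 for every y ≠ 0, and C^∞ on ℝⁿ \ {0}; set Ω := {x ∈ ℝⁿ : φ(x) < 1}. Then: (1) for every x ∈ Ω and every y ∈ ℝⁿ there exists a unique t ∈ ℝ with t = φ(y + t•x); denote this unique solution by Φ(x,y); (2) Φ(x,y) > 0 for all x ∈ Ω and y ≠ 0, and Φ(x,0) = 0; (3) the map (x,y) ↦ Φ(x,y) is C^∞ on Ω × (ℝⁿ \ {0}); (4) for each x ∈ Ω the function y ↦ Φ(x,y) is positively 1-homogeneous and subadditive, and it is regular whenever φ is regular; (5) for each x ∈ Ω one has {y ∈ ℝⁿ : Φ(x,y) < 1} = Ω − x := {z − x : z ∈ Ω}. -/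
/-!
For `φ x < 1`, subadditivity and homogeneity make `t ↦ t - φ (y + t • x)` increase at rate at least
`1 - φ x > 0`. Hence it has exactly one zero `Φ x y`, and comparing `Φ x y` with a number `t`
amounts to comparing `φ (y + t • x)` with `t`; every order-theoretic property of `Φ` follows from
this. The same rate bounds the partial derivative of `t - φ (y + t • x)` in `t` away from zero, so
the implicit function theorem transfers the smoothness of `φ` to `Φ`.
-/

open Set Topology

section SameRay

variable {R M : Type*} [Field R] [LinearOrder R] [IsStrictOrderedRing R] [AddCommGroup M]
  [Module R M]

theorem sameRay_iff_exists_nonneg_smul {y₁ y₂ : M} :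
    SameRay R y₁ y₂ ↔ ∃ (v : M) (a b : R), 0 ≤ a ∧ 0 ≤ b ∧ y₁ = a • v ∧ y₂ = b • v := by
  constructor
  · intro h
    obtain ⟨v, a, b, ha, hb, -, h₁, h₂⟩ := h.exists_eq_smul
    exact ⟨v, a, b, ha, hb, h₁, h₂⟩
  · rintro ⟨v, a, b, ha, hb, rfl, rfl⟩
    exact sameRay_smul_smul_of_mul_nonneg (mul_nonneg ha hb)

end SameRay

section ImplicitFunction

variable {𝕜 E : Type*} [RCLike 𝕜] [NormedAddCommGroup E] [NormedSpace 𝕜 E] [CompleteSpace E]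

theorem contDiffAt_of_eventually_unique_solution {F : E × 𝕜 → 𝕜} {ψ : E → 𝕜} {u : E × 𝕜}
    {k : WithTop ℕ∞} (hk : k ≠ 0) (hF : ContDiffAt 𝕜 k F u) (hF' : fderiv 𝕜 F u (0, 1) ≠ 0)
    (hψ : ∀ᶠ p in 𝓝 u.1, ∀ t, F (p, t) = F u → ψ p = t) : ContDiffAt 𝕜 k ψ u.1 := by
  have hinv : (fderiv 𝕜 F u ∘L .inr 𝕜 E 𝕜).IsInvertible := by
    refine ⟨ContinuousLinearEquiv.unitsEquivAut 𝕜 (Units.mk0 _ hF'), ?_⟩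
    ext
    simp
  refine (hF.contDiffAt_implicitFunction hk hinv).congr_of_eventuallyEq ?_
  filter_upwards [hψ, hF.eventually_apply_implicitFunction hk hinv] with p hunique hsol
  exact hunique _ hsol

end ImplicitFunction

section PartialDerivative

variable {E : Type*} [NormedAddCommGroup E] [NormedSpace ℝ E]

theorem fderiv_sub_map_add_smul_apply {φ : E → ℝ} {x y : E} {t : ℝ}
    (hφ : DifferentiableAt ℝ φ (y + t • x)) :
    fderiv ℝ (fun q : (E × E) × ℝ => q.2 - φ (q.1.2 + q.2 • q.1.1)) ((x, y), t) (0, 1) =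
      1 - fderiv ℝ φ (y + t • x) x := by
  have hF : DifferentiableAt ℝ (fun q : (E × E) × ℝ => q.2 - φ (q.1.2 + q.2 • q.1.1))
      ((x, y), t) :=
    differentiableAt_snd.sub (DifferentiableAt.comp ((x, y), t) (g := φ) hφ (by fun_prop))
  have hslice : HasDerivAt (fun s : ℝ => ((x, y), s)) (0, 1) t :=
    (hasDerivAt_const t (x, y)).prodMk (hasDerivAt_id t)
  have hline : HasDerivAt (fun s : ℝ => y + s • x) x t := by
    simpa using ((hasDerivAt_id t).smul_const x).const_add y
  exact (hF.hasFDerivAt.comp_hasDerivAt t hslice).unique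
    ((hasDerivAt_id t).sub (hφ.hasFDerivAt.comp_hasDerivAt t hline))

end PartialDerivative

/-- Sublinear functions: positively 1-homogeneous and subadditive, as in the Hahn–Banach theorem
`exists_extension_of_le_sublinear`. -/
structure IsSublinear {E : Type*} [AddCommGroup E] [Module ℝ E] (φ : E → ℝ) : Prop where
  map_smul_of_pos : ∀ α : ℝ, 0 < α → ∀ y, φ (α • y) = α * φ y
  map_add_le : ∀ y₁ y₂, φ (y₁ + y₂) ≤ φ y₁ + φ y₂

/-- Strictness of the triangle inequality off rays; a sublinear function with this property is
what the literature calls regular. -/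
def AdditiveOnlyOnRays {E : Type*} [AddCommGroup E] [Module ℝ E] (φ : E → ℝ) : Prop :=
  ∀ y₁ y₂, φ (y₁ + y₂) = φ y₁ + φ y₂ → SameRay ℝ y₁ y₂

/-- The Funk metric of `φ` at the base point `x` in the direction `y`, i.e. the solution `t` of
`t = φ (y + t • x)`. As an infimum it is defined for all `x`, but it solves this equation only under
an assumption such as `φ x < 1`. -/
noncomputable def funkMetric {E : Type*} [AddCommGroup E] [Module ℝ E] (φ : E → ℝ) (x y : E) : ℝ :=
  sInf {t | φ (y + t • x) ≤ t}

namespace IsSublinear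

section Module

variable {E : Type*} [AddCommGroup E] [Module ℝ E] {φ : E → ℝ}

theorem map_zero (hφ : IsSublinear φ) : φ 0 = 0 := by
  have h := hφ.map_smul_of_pos 2 two_pos 0
  rw [smul_zero] at h
  linarith

theorem map_smul_of_nonneg (hφ : IsSublinear φ) {α : ℝ} (hα : 0 ≤ α) (y : E) :
    φ (α • y) = α * φ y := by
  rcases hα.eq_or_lt with rfl | hα
  · rw [zero_smul, hφ.map_zero, zero_mul]
  · exact hφ.map_smul_of_pos α hα y

theorem convexOn (hφ : IsSublinear φ) : ConvexOn ℝ univ φ := by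
  refine ⟨convex_univ, fun y₁ _ y₂ _ a b ha hb _ => ?_⟩
  calc
    φ (a • y₁ + b • y₂) ≤ φ (a • y₁) + φ (b • y₂) := hφ.map_add_le _ _
    _ = a • φ y₁ + b • φ y₂ := by
      rw [hφ.map_smul_of_nonneg ha, hφ.map_smul_of_nonneg hb, smul_eq_mul, smul_eq_mul]

theorem map_add_smul_le (hφ : IsSublinear φ) (x y : E) {s t : ℝ} (hst : s ≤ t) :
    φ (y + t • x) ≤ φ (y + s • x) + (t - s) * φ x := by
  calc
    φ (y + t • x) = φ ((y + s • x) + (t - s) • x) := by congr 1; module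
    _ ≤ φ (y + s • x) + φ ((t - s) • x) := hφ.map_add_le _ _
    _ = φ (y + s • x) + (t - s) * φ x := by rw [hφ.map_smul_of_nonneg (sub_nonneg.2 hst)]

theorem continuous_map_add_smul (hφ : IsSublinear φ) (x y : E) :
    Continuous fun t : ℝ => φ (y + t • x) := by
  have hconvex : ConvexOn ℝ univ (φ ∘ AffineMap.lineMap (k := ℝ) y (y + x)) :=
    hφ.convexOn.comp_affineMap (AffineMap.lineMap y (y + x))
  simpa [Function.comp_def, AffineMap.lineMap_apply, add_comm] using
    hconvex.locallyLipschitz.continuous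

theorem strictMono_sub_map_add_smul (hφ : IsSublinear φ) {x : E} (hx : φ x < 1) (y : E) :
    StrictMono fun t : ℝ => t - φ (y + t • x) := by
  intro s t hst
  have hgrowth := hφ.map_add_smul_le x y hst.le
  have hgap : 0 < (1 - φ x) * (t - s) := mul_pos (sub_pos.2 hx) (sub_pos.2 hst)
  linarith

theorem exists_eq_map_add_smul (hφ : IsSublinear φ) {x : E} (hx : φ x < 1) (y : E) :
    ∃ t : ℝ, t = φ (y + t • x) := by
  have hx' : 0 < 1 - φ x := sub_pos.2 hx
  set T := |φ y| / (1 - φ x)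
  have hT_nonneg : 0 ≤ T := by positivity
  have hT_mul : T * (1 - φ x) = |φ y| := div_mul_cancel₀ _ hx'.ne'
  have hcont : Continuous fun t : ℝ => t - φ (y + t • x) :=
    continuous_id.sub (hφ.continuous_map_add_smul x y)
  have hlower : -T - φ (y + (-T) • x) ≤ 0 := by
    have h := hφ.map_add_smul_le x y (neg_nonpos.2 hT_nonneg)
    rw [zero_smul, add_zero] at h
    linarith [neg_abs_le (φ y)]
  have hupper : 0 ≤ T - φ (y + T • x) := by
    have h := hφ.map_add_smul_le x y hT_nonneg
    rw [zero_smul, add_zero] at h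
    linarith [le_abs_self (φ y)]
  obtain ⟨t, ht⟩ := mem_range_of_exists_le_of_exists_ge hcont ⟨-T, hlower⟩ ⟨T, hupper⟩
  exact ⟨t, sub_eq_zero.1 ht⟩

theorem funkMetric_eq_of_eq_map (hφ : IsSublinear φ) {x y : E} (hx : φ x < 1) {t : ℝ}
    (ht : t = φ (y + t • x)) : funkMetric φ x y = t := by
  have hset : {s : ℝ | φ (y + s • x) ≤ s} = Ici t := by
    ext s
    have h := (hφ.strictMono_sub_map_add_smul hx y).le_iff_le (a := t) (b := s)
    rw [sub_eq_zero.2 ht, sub_nonneg] at h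
    exact h
  rw [funkMetric, hset, csInf_Ici]

theorem funkMetric_eq_map (hφ : IsSublinear φ) {x : E} (hx : φ x < 1) (y : E) :
    funkMetric φ x y = φ (y + funkMetric φ x y • x) := by
  obtain ⟨t, ht⟩ := hφ.exists_eq_map_add_smul hx y
  rwa [hφ.funkMetric_eq_of_eq_map hx ht]

theorem funkMetric_le_iff (hφ : IsSublinear φ) {x y : E} (hx : φ x < 1) {t : ℝ} :
    funkMetric φ x y ≤ t ↔ φ (y + t • x) ≤ t := by
  have h := (hφ.strictMono_sub_map_add_smul hx y).le_iff_le (a := funkMetric φ x y) (b := t)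
  rw [sub_eq_zero.2 (hφ.funkMetric_eq_map hx y), sub_nonneg] at h
  exact h.symm

theorem funkMetric_lt_iff (hφ : IsSublinear φ) {x y : E} (hx : φ x < 1) {t : ℝ} :
    funkMetric φ x y < t ↔ φ (y + t • x) < t := by
  have h := (hφ.strictMono_sub_map_add_smul hx y).lt_iff_lt (a := funkMetric φ x y) (b := t)
  rw [sub_eq_zero.2 (hφ.funkMetric_eq_map hx y), sub_pos] at h
  exact h.symm

theorem funkMetric_pos_iff (hφ : IsSublinear φ) {x y : E} (hx : φ x < 1) :
    0 < funkMetric φ x y ↔ 0 < φ y := by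
  rw [← not_le, hφ.funkMetric_le_iff hx, zero_smul, add_zero, not_le]

theorem funkMetric_zero_right (hφ : IsSublinear φ) {x : E} (hx : φ x < 1) :
    funkMetric φ x 0 = 0 :=
  hφ.funkMetric_eq_of_eq_map hx (by rw [zero_smul, add_zero, hφ.map_zero])

theorem add_funkMetric_smul_ne_zero (hφ : IsSublinear φ) {x y : E} (hx : φ x < 1)
    (hy : 0 < φ y) : y + funkMetric φ x y • x ≠ 0 := by
  intro h
  have hsol := hφ.funkMetric_eq_map hx y
  rw [h, hφ.map_zero] at hsol
  exact ((hφ.funkMetric_pos_iff hx).2 hy).ne' hsol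

theorem isSublinear_funkMetric (hφ : IsSublinear φ) {x : E} (hx : φ x < 1) :
    IsSublinear (funkMetric φ x) where
  map_smul_of_pos α hα y := by
    refine hφ.funkMetric_eq_of_eq_map hx ?_
    calc
      α * funkMetric φ x y = α * φ (y + funkMetric φ x y • x) := by
        rw [← hφ.funkMetric_eq_map hx]
      _ = φ (α • (y + funkMetric φ x y • x)) := (hφ.map_smul_of_pos α hα _).symm
      _ = φ (α • y + (α * funkMetric φ x y) • x) := by rw [smul_add, mul_smul]
  map_add_le y₁ y₂ := by
    rw [hφ.funkMetric_le_iff hx]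
    calc
      φ (y₁ + y₂ + (funkMetric φ x y₁ + funkMetric φ x y₂) • x)
          = φ ((y₁ + funkMetric φ x y₁ • x) + (y₂ + funkMetric φ x y₂ • x)) := by
        rw [add_smul, add_add_add_comm]
      _ ≤ φ (y₁ + funkMetric φ x y₁ • x) + φ (y₂ + funkMetric φ x y₂ • x) := hφ.map_add_le _ _
      _ = funkMetric φ x y₁ + funkMetric φ x y₂ := by
        rw [← hφ.funkMetric_eq_map hx, ← hφ.funkMetric_eq_map hx]

-- `z ↦ z - φ z • x` inverts `y ↦ y + funkMetric φ x y • x` and is positively homogeneous.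
theorem eq_smul_sub_of_add_funkMetric_smul_eq (hφ : IsSublinear φ) {x y v : E} (hx : φ x < 1)
    {a : ℝ} (ha : 0 ≤ a) (h : y + funkMetric φ x y • x = a • v) : y = a • (v - φ v • x) := by
  have hvalue : funkMetric φ x y = a * φ v := by
    rw [hφ.funkMetric_eq_map hx, h, hφ.map_smul_of_nonneg ha]
  rw [eq_sub_of_add_eq h, hvalue, smul_sub, mul_smul]

theorem additiveOnlyOnRays_funkMetric (hφ : IsSublinear φ) {x : E} (hx : φ x < 1)
    (hreg : AdditiveOnlyOnRays φ) : AdditiveOnlyOnRays (funkMetric φ x) := by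
  intro y₁ y₂ hadd
  have hadd' : φ ((y₁ + funkMetric φ x y₁ • x) + (y₂ + funkMetric φ x y₂ • x)) =
      φ (y₁ + funkMetric φ x y₁ • x) + φ (y₂ + funkMetric φ x y₂ • x) := by
    rw [← hφ.funkMetric_eq_map hx, ← hφ.funkMetric_eq_map hx, ← hadd,
      hφ.funkMetric_eq_map hx (y₁ + y₂), hadd, add_smul, add_add_add_comm]
  obtain ⟨v, a, b, ha, hb, h₁, h₂⟩ := sameRay_iff_exists_nonneg_smul.1 (hreg _ _ hadd')
  exact sameRay_iff_exists_nonneg_smul.2 ⟨v - φ v • x, a, b, ha, hb,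
    hφ.eq_smul_sub_of_add_funkMetric_smul_eq hx ha h₁,
    hφ.eq_smul_sub_of_add_funkMetric_smul_eq hx hb h₂⟩

theorem setOf_funkMetric_lt_one_eq_image_sub (hφ : IsSublinear φ) {x : E} (hx : φ x < 1) :
    {y | funkMetric φ x y < 1} = (fun z => z - x) '' {z | φ z < 1} := by
  calc
    {y | funkMetric φ x y < 1} = {y | φ (y + x) < 1} := by
      simp only [hφ.funkMetric_lt_iff hx, one_smul]
    _ = (fun z => z - x) '' {z | φ z < 1} :=
      ((Equiv.subRight x).image_eq_preimage_symm {z | φ z < 1}).symm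

end Module

section NormedSpace

variable {E : Type*} [NormedAddCommGroup E] [NormedSpace ℝ E] {φ : E → ℝ}

theorem continuous_of_continuousAt (hφ : IsSublinear φ) {z : E} (hz : ContinuousAt φ z) :
    Continuous φ := by
  rw [← continuousOn_univ]
  have htfae := hφ.convexOn.continuousOn_tfae isOpen_univ univ_nonempty
  have hcontinuousOn_iff : ContinuousOn φ univ ↔ ∃ z ∈ univ, ContinuousAt φ z := htfae.out 1 2
  exact hcontinuousOn_iff.2 ⟨z, mem_univ z, hz⟩

theorem fderiv_apply_le (hφ : IsSublinear φ) {z : E} (hz : DifferentiableAt ℝ φ z) (x : E) :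
    fderiv ℝ φ z x ≤ φ x := by
  have hline : HasDerivAt (fun t : ℝ => φ (z + t • x)) (fderiv ℝ φ z x) 0 :=
    hz.hasFDerivAt.hasLineDerivAt x
  have hgap : HasDerivAt (fun t : ℝ => t * φ x - φ (z + t • x)) (1 * φ x - fderiv ℝ φ z x) 0 :=
    ((hasDerivAt_id 0).mul_const (φ x)).sub hline
  have hmono : Monotone fun t : ℝ => t * φ x - φ (z + t • x) := by
    intro s t hst
    have h := hφ.map_add_smul_le x z hst
    dsimp only
    linarith
  have hderiv := hmono.deriv_nonneg (x := 0)
  rw [hgap.deriv] at hderiv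
  linarith

theorem contDiffAt_funkMetric [CompleteSpace E] (hφ : IsSublinear φ) {k : WithTop ℕ∞}
    (hk : k ≠ 0) {x y : E} (hx : φ x < 1)
    (hsmooth : ContDiffAt ℝ k φ (y + funkMetric φ x y • x)) :
    ContDiffAt ℝ k (fun p : E × E => funkMetric φ p.1 p.2) (x, y) := by
  set z := y + funkMetric φ x y • x
  let u : (E × E) × ℝ := ((x, y), funkMetric φ x y)
  let F : (E × E) × ℝ → ℝ := fun q => q.2 - φ (q.1.2 + q.2 • q.1.1)
  have hF : ContDiffAt ℝ k F u :=
    contDiffAt_snd.sub (ContDiffAt.comp u (g := φ) hsmooth (by fun_prop))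
  have hFu : F u = 0 := sub_eq_zero.2 (hφ.funkMetric_eq_map hx y)
  have hpartial : fderiv ℝ F u (0, 1) = 1 - fderiv ℝ φ z x :=
    fderiv_sub_map_add_smul_apply (hsmooth.differentiableAt hk)
  have hpartial_ne : fderiv ℝ F u (0, 1) ≠ 0 := by
    have h := hφ.fderiv_apply_le (hsmooth.differentiableAt hk) x
    rw [hpartial]
    linarith
  have hcont : Continuous φ := hφ.continuous_of_continuousAt hsmooth.continuousAt
  have hnear : ∀ᶠ p : E × E in 𝓝 (x, y), φ p.1 < 1 :=
    (hcont.comp continuous_fst).continuousAt.eventually_lt_const hx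
  refine contDiffAt_of_eventually_unique_solution (u := u) hk hF hpartial_ne ?_
  filter_upwards [hnear] with p hp t ht
  exact hφ.funkMetric_eq_of_eq_map hp (sub_eq_zero.1 (ht.trans hFu))

end NormedSpace

end IsSublinear

theorem stmt_0_general {E : Type*} [NormedAddCommGroup E] [NormedSpace ℝ E] [CompleteSpace E]
    {φ : E → ℝ} (hφ : IsSublinear φ) (hpos : ∀ y, y ≠ 0 → 0 < φ y) {k : WithTop ℕ∞} (hk : k ≠ 0)
    (hsmooth : ContDiffOn ℝ k φ {y | y ≠ 0}) :
    ∃ Φ : E → E → ℝ,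
      (∀ x, φ x < 1 → ∀ y,
        Φ x y = φ (y + Φ x y • x) ∧ ∀ t : ℝ, t = φ (y + t • x) → t = Φ x y) ∧
      (∀ x, φ x < 1 → (∀ y, y ≠ 0 → 0 < Φ x y) ∧ Φ x 0 = 0) ∧
      ContDiffOn ℝ k (fun p : E × E => Φ p.1 p.2) ({x | φ x < 1} ×ˢ {y | y ≠ 0}) ∧
      (∀ x, φ x < 1 →
        (∀ α : ℝ, 0 < α → ∀ y, Φ x (α • y) = α * Φ x y) ∧
        (∀ y₁ y₂, Φ x (y₁ + y₂) ≤ Φ x y₁ + Φ x y₂) ∧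
        (AdditiveOnlyOnRays φ → AdditiveOnlyOnRays (Φ x))) ∧
      (∀ x, φ x < 1 → {y | Φ x y < 1} = (fun z => z - x) '' {z | φ z < 1}) := by
  refine ⟨funkMetric φ,
    fun x hx y => ⟨hφ.funkMetric_eq_map hx y, fun t ht => (hφ.funkMetric_eq_of_eq_map hx ht).symm⟩,
    fun x hx => ⟨fun y hy => (hφ.funkMetric_pos_iff hx).2 (hpos y hy),
      hφ.funkMetric_zero_right hx⟩,
    ?_,
    fun x hx => ⟨(hφ.isSublinear_funkMetric hx).map_smul_of_pos,
      (hφ.isSublinear_funkMetric hx).map_add_le, hφ.additiveOnlyOnRays_funkMetric hx⟩,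
    fun x hx => hφ.setOf_funkMetric_lt_one_eq_image_sub hx⟩
  rintro ⟨x, y⟩ ⟨hx, hy⟩
  have hne : y + funkMetric φ x y • x ≠ 0 := hφ.add_funkMetric_smul_ne_zero hx (hpos y hy)
  exact (hφ.contDiffAt_funkMetric hk hx
    (hsmooth.contDiffAt (isOpen_ne.mem_nhds hne))).contDiffWithinAt

/-- Global existence, uniqueness and properties of the solution `Φ` of the
Funk-type equation `Φ(x,y) = φ(y + Φ(x,y) • x)` for a (quasi-)regular positively
1-homogeneous function `φ` on `ℝⁿ`, on the domain `Ω = {φ < 1}`. -/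
theorem stmt_0 (n : ℕ) (hn : 1 ≤ n)
    (φ : EuclideanSpace ℝ (Fin n) → ℝ)
    (hhom : ∀ α : ℝ, 0 < α → ∀ y, φ (α • y) = α * φ y)
    (hsub : ∀ y₁ y₂, φ (y₁ + y₂) ≤ φ y₁ + φ y₂)
    (hpos : ∀ y : EuclideanSpace ℝ (Fin n), y ≠ 0 → 0 < φ y)
    (hsmooth : ContDiffOn ℝ (⊤ : ℕ∞) φ {y | y ≠ 0}) :
    ∃ Φ : EuclideanSpace ℝ (Fin n) → EuclideanSpace ℝ (Fin n) → ℝ,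
      -- (1) `Φ x y` is the unique solution `t` of `t = φ(y + t • x)`
      (∀ x, φ x < 1 → ∀ y,
        Φ x y = φ (y + Φ x y • x) ∧ ∀ t : ℝ, t = φ (y + t • x) → t = Φ x y) ∧
      -- (2) positivity and vanishing at the origin
      (∀ x, φ x < 1 → (∀ y, y ≠ 0 → 0 < Φ x y) ∧ Φ x 0 = 0) ∧
      -- (3) smoothness on `Ω × (ℝⁿ \ {0})`
      ContDiffOn ℝ (⊤ : ℕ∞)
        (fun p : EuclideanSpace ℝ (Fin n) × EuclideanSpace ℝ (Fin n) => Φ p.1 p.2)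
        ({x | φ x < 1} ×ˢ {y | y ≠ 0}) ∧
      -- (4) homogeneity, subadditivity, regularity in `y`
      (∀ x, φ x < 1 →
        (∀ α : ℝ, 0 < α → ∀ y, Φ x (α • y) = α * Φ x y) ∧
        (∀ y₁ y₂, Φ x (y₁ + y₂) ≤ Φ x y₁ + Φ x y₂) ∧
        ((∀ y₁ y₂, φ (y₁ + y₂) = φ y₁ + φ y₂ →
            ∃ (v : EuclideanSpace ℝ (Fin n)) (a b : ℝ),
              0 ≤ a ∧ 0 ≤ b ∧ y₁ = a • v ∧ y₂ = b • v) →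
          ∀ y₁ y₂, Φ x (y₁ + y₂) = Φ x y₁ + Φ x y₂ →
            ∃ (v : EuclideanSpace ℝ (Fin n)) (a b : ℝ),
              0 ≤ a ∧ 0 ≤ b ∧ y₁ = a • v ∧ y₂ = b • v)) ∧
      -- (5) the unit level set of `Φ(x, ·)` is `Ω − x`
      (∀ x, φ x < 1 → {y | Φ x y < 1} = (fun z => z - x) '' {z | φ z < 1}) := by
  simpa only [AdditiveOnlyOnRays, sameRay_iff_exists_nonneg_smul] using
    stmt_0_general ⟨hhom, hsub⟩ hpos (by simp) hsmooth
end

section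
/- Let φ : ℝⁿ → ℝ be positively 1-homogeneous, let S ⊆ ℝⁿ, and let Φ : S × ℝⁿ → ℝ be any function satisfying Φ(x,y) = φ(y + Φ(x,y)•x) for all (x,y) ∈ S × ℝⁿ. Then: (i) if φ(y) > 0 for every y ≠ 0, then every x ∈ S satisfies 0 ≤ φ(x) < 1, i.e. S ⊆ {x : 0 ≤ φ(x) < 1}; (ii) if φ(y) < 0 for every y ≠ 0, then every x ∈ S satisfies −1 < φ(−x) ≤ 0, i.e. S ⊆ {x : −1 < φ(−x) ≤ 0}. (In particular this applies to any connected component, containing the origin, of the set of points x at which the equation Φ(x,y) = φ(y + x·Φ(x,y)) admits a solution for every y.) -/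
/-!
Taking `y = x` in the equation turns `t = Φ(x, x)` into a solution of `t = φ (x + t • x)`, that is,
of `t = (1 + t) φ x` by homogeneity. If `φ` is nonnegative then so is `t`, and `φ x ≥ 1` would give
`t ≥ 1 + t`. The nonpositive case is the nonnegative one for the reflection `y ↦ -φ (-y)`.
-/

/-- Positive 1-homogeneity of a function from a module to its ordered ring of scalars. Only strictly
positive scalars occur, so that `φ (-y)` is unrelated to `φ y`. -/
def IsPosHomogeneous {R E : Type*} [Ring R] [LinearOrder R] [AddCommGroup E] [Module R E]
    (φ : E → R) : Prop :=
  ∀ α : R, 0 < α → ∀ y, φ (α • y) = α * φ y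

namespace IsPosHomogeneous

variable {R E : Type*} [Ring R] [LinearOrder R] [AddCommGroup E] [Module R E]
  {φ : E → R} {x : E} {t : R}

theorem neg_comp_neg (hφ : IsPosHomogeneous φ) : IsPosHomogeneous fun y ↦ -φ (-y) := by
  intro α hα y
  beta_reduce
  rw [← smul_neg, hφ α hα, mul_neg]

variable [IsStrictOrderedRing R]

theorem map_zero (hφ : IsPosHomogeneous φ) : φ 0 = 0 := by
  have h_double : φ 0 = φ 0 + φ 0 := by
    simpa only [smul_zero, two_mul] using hφ 2 two_pos 0
  exact left_eq_add.mp h_double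

theorem nonneg (hφ : IsPosHomogeneous φ) (hnonneg : ∀ y, y ≠ 0 → 0 ≤ φ y) (y : E) : 0 ≤ φ y := by
  obtain rfl | hy := eq_or_ne y 0
  · exact hφ.map_zero.ge
  · exact hnonneg y hy

theorem lt_one_of_eq_apply_add_smul (hφ : IsPosHomogeneous φ) (ht : 0 < 1 + t)
    (h : t = φ (x + t • x)) : φ x < 1 := by
  have h_fixed : t = (1 + t) * φ x := by
    rwa [← hφ _ ht, add_smul, one_smul]
  refine lt_of_mul_lt_mul_left ?_ ht.le
  calc (1 + t) * φ x = t := h_fixed.symm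
    _ < 1 + t := lt_one_add t
    _ = (1 + t) * 1 := (mul_one _).symm

theorem mem_Ico_of_eq_apply_add_smul (hφ : IsPosHomogeneous φ) (hnonneg : ∀ y, y ≠ 0 → 0 ≤ φ y)
    (h : t = φ (x + t • x)) : φ x ∈ Set.Ico 0 1 := by
  have ht : 0 ≤ t := h ▸ hφ.nonneg hnonneg _
  exact ⟨hφ.nonneg hnonneg x, hφ.lt_one_of_eq_apply_add_smul (by positivity) h⟩

theorem mem_Ioc_of_eq_apply_neg_add_smul (hφ : IsPosHomogeneous φ)
    (hnonpos : ∀ y, y ≠ 0 → φ y ≤ 0) (h : t = φ (-x + t • x)) : φ (-x) ∈ Set.Ioc (-1) 0 := by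
  have h_reflected : -t = -φ (-(x + -t • x)) := by
    rwa [neg_add, neg_smul, neg_neg, neg_inj]
  have h_mem : -φ (-x) ∈ Set.Ico 0 1 := hφ.neg_comp_neg.mem_Ico_of_eq_apply_add_smul
    (fun y hy ↦ neg_nonneg.mpr (hnonpos (-y) (neg_ne_zero.mpr hy))) h_reflected
  exact ⟨neg_lt.mp h_mem.2, neg_nonneg.mp h_mem.1⟩

end IsPosHomogeneous

theorem stmt_4_general {R E : Type*} [Ring R] [LinearOrder R] [IsStrictOrderedRing R]
    [AddCommGroup E] [Module R E] {φ : E → R} (hφ : IsPosHomogeneous φ) {S : Set E}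
    {Φ : E → E → R} (hΦ : ∀ x ∈ S, ∀ y, Φ x y = φ (y + Φ x y • x)) :
    ((∀ y, y ≠ 0 → 0 ≤ φ y) → ∀ x ∈ S, 0 ≤ φ x ∧ φ x < 1) ∧
    ((∀ y, y ≠ 0 → φ y ≤ 0) → ∀ x ∈ S, -1 < φ (-x) ∧ φ (-x) ≤ 0) :=
  ⟨fun hnonneg x hx ↦ hφ.mem_Ico_of_eq_apply_add_smul hnonneg (hΦ x hx x),
    fun hnonpos x hx ↦ hφ.mem_Ioc_of_eq_apply_neg_add_smul hnonpos (hΦ x hx (-x))⟩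

/-- Constraints on the domain of definition of a solution of the
Funk-type equation: if `Φ(x,y) = φ(y + Φ(x,y)•x)` for all `x ∈ S` and all `y`, then
`S ⊆ {0 ≤ φ < 1}` when `φ` is positive away from `0`, and `S ⊆ {−1 < φ(−·) ≤ 0}` when
`φ` is negative away from `0`. -/
theorem stmt_4 (n : ℕ) (hn : 1 ≤ n)
    (φ : EuclideanSpace ℝ (Fin n) → ℝ)
    (hhom : ∀ α : ℝ, 0 < α → ∀ y, φ (α • y) = α * φ y)
    (S : Set (EuclideanSpace ℝ (Fin n)))
    (Φ : EuclideanSpace ℝ (Fin n) → EuclideanSpace ℝ (Fin n) → ℝ)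
    (hΦ : ∀ x ∈ S, ∀ y, Φ x y = φ (y + Φ x y • x)) :
    ((∀ y : EuclideanSpace ℝ (Fin n), y ≠ 0 → 0 < φ y) →
      ∀ x ∈ S, 0 ≤ φ x ∧ φ x < 1) ∧
    ((∀ y : EuclideanSpace ℝ (Fin n), y ≠ 0 → φ y < 0) →
      ∀ x ∈ S, -1 < φ (-x) ∧ φ (-x) ≤ 0) := by
  exact (stmt_4_general hhom hΦ).imp (fun h hpos ↦ h fun y hy ↦ (hpos y hy).le)
    (fun h hneg ↦ h fun y hy ↦ (hneg y hy).le)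
end

section
/- Let φ : ℝⁿ → ℝ be positively 1-homogeneous with φ(y) > 0 for every y ≠ 0, let x ∈ ℝⁿ satisfy φ(x) < 1, and let y ∈ ℝⁿ \ {0}. Define S := {ζ ∈ ℝ : ζ = φ(y + ζ•x)} and I := {p ∈ ℝⁿ : φ(p) = 1 and p = x + k•y for some k ≥ 0}. Then every element of S is positive, the map ζ ↦ x + ζ⁻¹•y is a bijection from S onto I, and in particular S and I have the same cardinality. -/
/-!
For `ζ > 0` we have `x + ζ⁻¹ • y = ζ⁻¹ • (y + ζ • x)`, so homogeneity turns `φ (x + ζ⁻¹ • y) = 1`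
into `φ (y + ζ • x) = ζ`. Hence `ζ ↦ x + ζ⁻¹ • y` matches the positive solutions with the points
`x + k • y`, `k > 0`, of the indicatrix. The value `k = 0` is excluded by `φ x ≠ 1`, and
nonpositive `ζ` are excluded by `0 ≤ φ` and `φ y ≠ 0`.
-/

universe u v

section

variable {K : Type u} {E : Type v} [Field K] [LinearOrder K] [AddCommGroup E] [Module K E]
  {φ : E → K} {x y : E}

/-- Positive homogeneity of degree one. Only positive scalars are allowed, so `φ (-z)` is not
determined by `φ z`. -/
def PosHomogeneous (φ : E → K) : Prop :=
  ∀ α : K, 0 < α → ∀ z, φ (α • z) = α * φ z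

/-- The set `S` of solutions of the implicit equation `ζ = φ (y + ζ • x)`; all scalars are
admitted, of either sign. -/
def implicitSolutions (φ : E → K) (x y : E) : Set K :=
  {ζ | ζ = φ (y + ζ • x)}

/-- The set `I` of points where the closed ray from `x` in the direction `y` meets the indicatrix
of `φ`. It consists of points of `E`, not of ray parameters. -/
def indicatrixInterRay (φ : E → K) (x y : E) : Set E :=
  {p | φ p = 1 ∧ ∃ k : K, 0 ≤ k ∧ p = x + k • y}

theorem pos_of_mem_implicitSolutions (hnonneg : ∀ z, 0 ≤ φ z) (hy : φ y ≠ 0) {ζ : K}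
    (hζ : ζ ∈ implicitSolutions φ x y) : 0 < ζ := by
  have hζ_eq : ζ = φ (y + ζ • x) := hζ
  have hζ_nonneg : 0 ≤ ζ := hζ_eq ▸ hnonneg _
  refine hζ_nonneg.lt_of_ne' fun hζ_zero => hy ?_
  simpa [hζ_zero] using hζ_eq.symm

namespace PosHomogeneous

variable [IsStrictOrderedRing K]

theorem map_zero (hφ : PosHomogeneous φ) : φ 0 = 0 := by
  have h := hφ 2 two_pos 0
  rw [smul_zero] at h
  linarith

theorem nonneg (hφ : PosHomogeneous φ) (hpos : ∀ z, z ≠ 0 → 0 < φ z) (z : E) : 0 ≤ φ z := by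
  rcases eq_or_ne z 0 with rfl | hz
  · exact hφ.map_zero.ge
  · exact (hpos z hz).le

theorem map_add_inv_smul_eq_one_iff (hφ : PosHomogeneous φ) {ζ : K} (hζ : 0 < ζ) :
    φ (x + ζ⁻¹ • y) = 1 ↔ ζ ∈ implicitSolutions φ x y := by
  have hscale : x + ζ⁻¹ • y = ζ⁻¹ • (y + ζ • x) := by
    rw [smul_add, inv_smul_smul₀ hζ.ne', add_comm]
  rw [hscale, hφ _ (inv_pos.2 hζ), inv_mul_eq_one₀ hζ.ne']
  rfl

theorem bijOn_pos_implicitSolutions (hφ : PosHomogeneous φ) (hx : φ x ≠ 1) (hy : y ≠ 0) :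
    Set.BijOn (fun ζ : K => x + ζ⁻¹ • y) (implicitSolutions φ x y ∩ Set.Ioi 0)
      (indicatrixInterRay φ x y) := by
  refine ⟨?mapsTo, ?injOn, ?surjOn⟩
  case mapsTo =>
    rintro ζ ⟨hζ, hζ_pos⟩
    exact ⟨(hφ.map_add_inv_smul_eq_one_iff hζ_pos).2 hζ, ζ⁻¹, (inv_pos.2 hζ_pos).le, rfl⟩
  case injOn =>
    intro ζ _ ξ _ h
    exact inv_injective (smul_left_injective K hy (add_left_cancel h))
  case surjOn =>
    rintro _ ⟨hp, k, hk, rfl⟩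
    have hk_ne : k ≠ 0 := by
      rintro rfl
      exact hx (by simpa using hp)
    have hk_inv : 0 < k⁻¹ := inv_pos.2 (hk.lt_of_ne' hk_ne)
    refine ⟨k⁻¹, ⟨(hφ.map_add_inv_smul_eq_one_iff hk_inv).1 ?_, hk_inv⟩, ?_⟩
    · rwa [inv_inv]
    · simp only [inv_inv]

theorem bijOn_implicitSolutions (hφ : PosHomogeneous φ) (hnonneg : ∀ z, 0 ≤ φ z)
    (hx : φ x ≠ 1) (hy : φ y ≠ 0) :
    Set.BijOn (fun ζ : K => x + ζ⁻¹ • y) (implicitSolutions φ x y)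
      (indicatrixInterRay φ x y) := by
  have hy_ne : y ≠ 0 := by
    rintro rfl
    exact hy hφ.map_zero
  have hsub : implicitSolutions φ x y ⊆ Set.Ioi 0 :=
    fun _ => pos_of_mem_implicitSolutions hnonneg hy
  simpa only [Set.inter_eq_left.2 hsub] using hφ.bijOn_pos_implicitSolutions hx hy_ne

end PosHomogeneous

theorem stmt_5_general [IsStrictOrderedRing K] (hφ : PosHomogeneous φ) (hnonneg : ∀ z, 0 ≤ φ z)
    (hx : φ x ≠ 1) (hy : φ y ≠ 0) :
    (∀ ζ ∈ implicitSolutions φ x y, 0 < ζ) ∧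
    Set.BijOn (fun ζ : K => x + ζ⁻¹ • y) (implicitSolutions φ x y) (indicatrixInterRay φ x y) ∧
    Cardinal.lift.{v} (Cardinal.mk (implicitSolutions φ x y)) =
      Cardinal.lift.{u} (Cardinal.mk (indicatrixInterRay φ x y)) :=
  have hbij := hφ.bijOn_implicitSolutions hnonneg hx hy
  ⟨fun _ => pos_of_mem_implicitSolutions hnonneg hy, hbij,
    Cardinal.mk_congr_lift (hbij.equiv _)⟩

end

/-- The solutions `ζ` of `ζ = φ(y + ζ•x)` are positive and correspond
bijectively, via `ζ ↦ x + ζ⁻¹•y`, to the intersection points of the ray from `x` in the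
direction `y` with the indicatrix `φ⁻¹(1)`; in particular the two sets have the same
cardinality. -/
theorem stmt_5 (n : ℕ) (hn : 1 ≤ n)
    (φ : EuclideanSpace ℝ (Fin n) → ℝ)
    (hhom : ∀ α : ℝ, 0 < α → ∀ y, φ (α • y) = α * φ y)
    (hpos : ∀ y : EuclideanSpace ℝ (Fin n), y ≠ 0 → 0 < φ y)
    (x y : EuclideanSpace ℝ (Fin n)) (hx : φ x < 1) (hy : y ≠ 0) :
    (∀ ζ ∈ {ζ : ℝ | ζ = φ (y + ζ • x)}, 0 < ζ) ∧
    Set.BijOn (fun ζ : ℝ => x + ζ⁻¹ • y)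
      {ζ : ℝ | ζ = φ (y + ζ • x)}
      {p : EuclideanSpace ℝ (Fin n) | φ p = 1 ∧ ∃ k : ℝ, 0 ≤ k ∧ p = x + k • y} ∧
    Cardinal.mk {ζ : ℝ | ζ = φ (y + ζ • x)} =
      Cardinal.mk {p : EuclideanSpace ℝ (Fin n) | φ p = 1 ∧ ∃ k : ℝ, 0 ≤ k ∧ p = x + k • y} := by
  have hφ : PosHomogeneous φ := hhom
  obtain ⟨hS_pos, hbij, hcard⟩ := stmt_5_general hφ (hφ.nonneg hpos) hx.ne (hpos y hy).ne'
  exact ⟨hS_pos, hbij, Cardinal.lift_inj.1 hcard⟩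
end

section
/- Let n ≥ 1 and let a ∈ ℝⁿ with ‖a‖ < 1; define the Randers norm φ(y) := ‖y‖ + ⟨a,y⟩ and Ω := {x ∈ ℝⁿ : φ(x) < 1}. For x, y ∈ ℝⁿ set ℬ(x) := (1 − ⟨a,x⟩)² − ‖x‖², 𝒜(x,y) := ((1 − ⟨a,x⟩)² − ‖x‖²)·(‖y‖² − ⟨a,y⟩²) + (⟨x,y⟩ + (1 − ⟨a,x⟩)·⟨a,y⟩)², and 𝒞(x,y) := (1 − ⟨a,x⟩)·⟨a,y⟩. Then for every (x,y) ∈ Ω × ℝⁿ: ℬ(x) > 0, 𝒜(x,y) ≥ 0, and there exists a unique t ∈ ℝ with t = φ(y + t•x), given explicitly by t = (√(𝒜(x,y)) + 𝒞(x,y) + ⟨x,y⟩) / ℬ(x). (This is the Funk metric of the Randers domain Ω.) -/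
open scoped RealInnerProductSpace

/-!
With `u = 1 - ⟪a, x⟫` and `q = ⟪a, y⟫`, the equation `t = ‖y + t • x‖ + ⟪a, y + t • x⟫` reads
`‖y + t • x‖ = u * t - q`, and `φ x < 1` reads `‖x‖ < u`: in space-time `E × ℝ`, the line through
`(y, -q)` in the timelike direction `(x, u)` meets the upper light cone exactly once. Squaring gives
a quadratic equation in `t`, with one root for each half of the cone. By Cauchy–Schwarz, a point
`(p, c)` of the cone lies on the upper half exactly when `⟪x, p⟫ ≤ u * c`, which selects the root.
-/

section LineCone

variable {E : Type*} [SeminormedAddCommGroup E] {u c q t : ℝ} {x y p : E}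

theorem sq_sub_norm_sq_pos (hx : ‖x‖ < u) : 0 < u ^ 2 - ‖x‖ ^ 2 :=
  sub_pos.mpr (pow_lt_pow_left₀ hx (norm_nonneg x) two_ne_zero)

variable [InnerProductSpace ℝ E]

theorem norm_eq_iff_sq_eq_sq_and_inner_le (hx : ‖x‖ < u) :
    ‖p‖ = c ↔ ‖p‖ ^ 2 = c ^ 2 ∧ ⟪x, p⟫ ≤ u * c := by
  constructor
  · rintro rfl
    exact ⟨rfl, (real_inner_le_norm x p).trans (by gcongr)⟩
  · rintro ⟨hsq, hinner⟩
    refine (sq_eq_sq_iff_eq_or_eq_neg.mp hsq).elim id fun hneg ↦ ?_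
    have hlower : -(‖x‖ * ‖p‖) ≤ ⟪x, p⟫ := neg_le_of_abs_le (abs_real_inner_le_norm x p)
    have hmul : (u - ‖x‖) * ‖p‖ ≤ 0 := by
      rw [← neg_eq_iff_eq_neg.mpr hneg] at hinner
      linarith
    have hp : ‖p‖ = 0 :=
      (nonpos_of_mul_nonpos_right hmul (sub_pos.mpr hx)).antisymm (norm_nonneg p)
    linarith

theorem norm_add_smul_sq_real (x y : E) (t : ℝ) :
    ‖y + t • x‖ ^ 2 = ‖y‖ ^ 2 + 2 * t * ⟪x, y⟫ + t ^ 2 * ‖x‖ ^ 2 := by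
  rw [norm_add_sq_real, real_inner_smul_right, real_inner_comm, norm_smul, mul_pow,
    Real.norm_eq_abs, sq_abs]
  ring

/-- The reduced discriminant of the quadratic equation `‖y + t • x‖ ^ 2 = (u * t - q) ^ 2` in `t`,
that is, a quarter of the usual one. For `u = 1 - ⟪a, x⟫` and `q = ⟪a, y⟫` it is the paper's
`𝒜(x, y)`. -/
def lineConeDiscr (u q : ℝ) (x y : E) : ℝ :=
  (u ^ 2 - ‖x‖ ^ 2) * (‖y‖ ^ 2 - q ^ 2) + (⟪x, y⟫ + u * q) ^ 2

-- The vector `u • y + q • x` is where the line meets `E × {0}`, rescaled by `u`.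
theorem sq_mul_lineConeDiscr (u q : ℝ) (x y : E) :
    u ^ 2 * lineConeDiscr u q x y =
      (u ^ 2 - ‖x‖ ^ 2) * ‖u • y + q • x‖ ^ 2 + ⟪x, u • y + q • x⟫ ^ 2 := by
  rw [norm_add_smul_sq_real, inner_add_right, real_inner_smul_right, real_inner_smul_right,
    real_inner_self_eq_norm_sq, norm_smul, mul_pow, Real.norm_eq_abs, sq_abs, lineConeDiscr]
  ring

theorem lineConeDiscr_nonneg (hx : ‖x‖ < u) : 0 ≤ lineConeDiscr u q x y := by
  have hu : 0 < u := (norm_nonneg x).trans_lt hx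
  have hB := sq_sub_norm_sq_pos hx
  refine (mul_nonneg_iff_of_pos_left (pow_pos hu 2)).mp ?_
  rw [sq_mul_lineConeDiscr]
  positivity

theorem lineConeDiscr_eq_complete_square (u q t : ℝ) (x y : E) :
    lineConeDiscr u q x y = ((u ^ 2 - ‖x‖ ^ 2) * t - (u * q + ⟪x, y⟫)) ^ 2 +
      (u ^ 2 - ‖x‖ ^ 2) * (‖y + t • x‖ ^ 2 - (u * t - q) ^ 2) := by
  rw [norm_add_smul_sq_real, lineConeDiscr]
  ring

theorem norm_add_smul_sq_eq_sq_iff (hx : ‖x‖ < u) :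
    ‖y + t • x‖ ^ 2 = (u * t - q) ^ 2 ↔
      lineConeDiscr u q x y = ((u ^ 2 - ‖x‖ ^ 2) * t - (u * q + ⟪x, y⟫)) ^ 2 := by
  rw [lineConeDiscr_eq_complete_square u q t, add_eq_left, mul_eq_zero,
    or_iff_right (sq_sub_norm_sq_pos hx).ne', sub_eq_zero]

theorem inner_add_smul_le_mul_iff :
    ⟪x, y + t • x⟫ ≤ u * (u * t - q) ↔ 0 ≤ (u ^ 2 - ‖x‖ ^ 2) * t - (u * q + ⟪x, y⟫) := by
  rw [inner_add_right, real_inner_smul_right, real_inner_self_eq_norm_sq, ← sub_nonneg]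
  ring_nf

theorem norm_add_smul_eq_mul_sub_iff (hx : ‖x‖ < u) :
    ‖y + t • x‖ = u * t - q ↔
      t = (√(lineConeDiscr u q x y) + u * q + ⟪x, y⟫) / (u ^ 2 - ‖x‖ ^ 2) := by
  set b := (u ^ 2 - ‖x‖ ^ 2) * t - (u * q + ⟪x, y⟫) with hb
  calc ‖y + t • x‖ = u * t - q
      ↔ lineConeDiscr u q x y = b ^ 2 ∧ 0 ≤ b := by
        rw [norm_eq_iff_sq_eq_sq_and_inner_le hx, norm_add_smul_sq_eq_sq_iff hx,
          inner_add_smul_le_mul_iff]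
    _ ↔ √(lineConeDiscr u q x y) = b := by
        rw [Real.sqrt_eq_cases, or_iff_left fun h ↦ (lineConeDiscr_nonneg hx).not_gt h.1, ← sq,
          eq_comm]
    _ ↔ t = (√(lineConeDiscr u q x y) + u * q + ⟪x, y⟫) / (u ^ 2 - ‖x‖ ^ 2) := by
        rw [eq_div_iff (sq_sub_norm_sq_pos hx).ne', hb]
        constructor <;> intro h <;> linarith

theorem eq_norm_add_inner_iff (a x y : E) (t : ℝ) :
    t = ‖y + t • x‖ + ⟪a, y + t • x⟫ ↔ ‖y + t • x‖ = (1 - ⟪a, x⟫) * t - ⟪a, y⟫ := by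
  rw [inner_add_right, real_inner_smul_right]
  constructor <;> intro h <;> linarith

theorem stmt_7_general (a x y : E) (hx : ‖x‖ + ⟪a, x⟫ < 1) :
    0 < (1 - ⟪a, x⟫) ^ 2 - ‖x‖ ^ 2 ∧
    0 ≤ ((1 - ⟪a, x⟫) ^ 2 - ‖x‖ ^ 2) * (‖y‖ ^ 2 - ⟪a, y⟫ ^ 2) +
        (⟪x, y⟫ + (1 - ⟪a, x⟫) * ⟪a, y⟫) ^ 2 ∧
    ∀ t : ℝ,
      t = ‖y + t • x‖ + ⟪a, y + t • x⟫ ↔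
      t = (√(((1 - ⟪a, x⟫) ^ 2 - ‖x‖ ^ 2) * (‖y‖ ^ 2 - ⟪a, y⟫ ^ 2) +
              (⟪x, y⟫ + (1 - ⟪a, x⟫) * ⟪a, y⟫) ^ 2) +
            (1 - ⟪a, x⟫) * ⟪a, y⟫ + ⟪x, y⟫) /
          ((1 - ⟪a, x⟫) ^ 2 - ‖x‖ ^ 2) := by
  have hxu : ‖x‖ < 1 - ⟪a, x⟫ := lt_sub_iff_add_lt.mpr hx
  exact ⟨sq_sub_norm_sq_pos hxu, lineConeDiscr_nonneg hxu, fun t ↦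
    (eq_norm_add_inner_iff a x y t).trans (norm_add_smul_eq_mul_sub_iff hxu)⟩

end LineCone

/-- The Funk metric of a Randers domain: for the Randers norm
`φ(y) = ‖y‖ + ⟨a,y⟩` with `‖a‖ < 1` and any `x` with `φ(x) < 1`, the equation
`t = φ(y + t•x)` has a unique solution, given by the explicit formula
`t = (√𝒜 + 𝒞 + ⟨x,y⟩)/ℬ`; moreover `ℬ(x) > 0` and `𝒜(x,y) ≥ 0`. -/
theorem stmt_7 (n : ℕ) (hn : 1 ≤ n)
    (a : EuclideanSpace ℝ (Fin n)) (ha : ‖a‖ < 1)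
    (x y : EuclideanSpace ℝ (Fin n)) (hx : ‖x‖ + ⟪a, x⟫ < 1) :
    0 < (1 - ⟪a, x⟫) ^ 2 - ‖x‖ ^ 2 ∧
    0 ≤ ((1 - ⟪a, x⟫) ^ 2 - ‖x‖ ^ 2) * (‖y‖ ^ 2 - ⟪a, y⟫ ^ 2) +
        (⟪x, y⟫ + (1 - ⟪a, x⟫) * ⟪a, y⟫) ^ 2 ∧
    ∀ t : ℝ,
      t = ‖y + t • x‖ + ⟪a, y + t • x⟫ ↔
      t = (Real.sqrt (((1 - ⟪a, x⟫) ^ 2 - ‖x‖ ^ 2) * (‖y‖ ^ 2 - ⟪a, y⟫ ^ 2) +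
              (⟪x, y⟫ + (1 - ⟪a, x⟫) * ⟪a, y⟫) ^ 2) +
            (1 - ⟪a, x⟫) * ⟪a, y⟫ + ⟪x, y⟫) /
          ((1 - ⟪a, x⟫) ^ 2 - ‖x‖ ^ 2) :=
  stmt_7_general a x y hx
end

section
/- Let a < 0 and let f : ℝ → ℝ be three times continuously differentiable on the interval (a, +∞), with f(0) = 0, f′(0) = 1, f′(t) > 0 for all t > a, and 2·f′′′(t)·f′(t) − 3·f′′(t)² = 0 for all t > a. Then either f(t) = t for all t ≥ 0, or there exists a constant c > 0 such that f(t) = c·t/(c + t) for all t ≥ 0. -/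
/-!
The equation says that the Schwarzian derivative `S(f)` vanishes. The function `u = (f′)^(-1/2)`
solves the linear equation `u″ = -S(f) u / 2`, so here `u` is affine: `f′` is `f′(t₀)` divided by
the square of an affine function `1 + k (t - t₀)` without zeros, and integrating once more shows
that `f` is fractional linear. On an interval unbounded to the right, positivity of `1 + k t`
forces `k ≥ 0`; the two alternatives are `k = 0` and `c = 1 / k`.
-/

/-- The Schwarzian derivative `f‴ / f′ - (3 / 2) (f″ / f′)²` of a real function. It is meaningful
only where `f` is three times differentiable and `f′ ≠ 0`. -/
noncomputable def schwarzian (f : ℝ → ℝ) (t : ℝ) : ℝ :=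
  deriv (deriv (deriv f)) t / deriv f t - 3 / 2 * (deriv (deriv f) t / deriv f t) ^ 2

/-- The denominator, normalized to be `1` at `t₀`, of the fractional linear function
`osculatingMobius f t₀`. -/
noncomputable def osculatingDenom (f : ℝ → ℝ) (t₀ t : ℝ) : ℝ :=
  1 - deriv (deriv f) t₀ / (2 * deriv f t₀) * (t - t₀)

/-- The fractional linear function with the same value and first two derivatives as `f` at `t₀`,
assuming `f′(t₀) ≠ 0`. It takes the junk value `f t₀` at its pole. -/
noncomputable def osculatingMobius (f : ℝ → ℝ) (t₀ t : ℝ) : ℝ :=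
  f t₀ + deriv f t₀ * (t - t₀) / osculatingDenom f t₀ t

theorem schwarzian_eq_zero_iff {f : ℝ → ℝ} {t : ℝ} (hf' : deriv f t ≠ 0) :
    schwarzian f t = 0 ↔
      2 * deriv (deriv (deriv f)) t * deriv f t - 3 * (deriv (deriv f) t) ^ 2 = 0 := by
  have clear_denominators : 2 * deriv (deriv (deriv f)) t * deriv f t
      - 3 * (deriv (deriv f) t) ^ 2 = 2 * deriv f t ^ 2 * schwarzian f t := by
    rw [schwarzian]
    field_simp
  simp [clear_denominators, hf']

theorem hasDerivAt_inv_sqrt {g : ℝ → ℝ} {g' t : ℝ} (hg : HasDerivAt g g' t) (hpos : 0 < g t) :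
    HasDerivAt (fun x ↦ (√(g x))⁻¹) (-(1 / 2) * (g' / g t) * (√(g t))⁻¹) t := by
  refine ((hg.sqrt hpos.ne').fun_inv (Real.sqrt_ne_zero'.2 hpos)).congr_deriv ?_
  rw [Real.sq_sqrt hpos.le]
  ring

/-- With `u = (f′)^(-1/2)`, whose derivative is computed by `hasDerivAt_inv_sqrt`, this is
`u″ = -S(f) u / 2`. -/
theorem hasDerivAt_deriv_inv_sqrt_deriv {f : ℝ → ℝ} {t : ℝ}
    (hf' : DifferentiableAt ℝ (deriv f) t) (hf'' : DifferentiableAt ℝ (deriv (deriv f)) t)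
    (hpos : 0 < deriv f t) :
    HasDerivAt (fun x ↦ -(1 / 2) * (deriv (deriv f) x / deriv f x) * (√(deriv f x))⁻¹)
      (-(1 / 2) * schwarzian f t * (√(deriv f t))⁻¹) t := by
  have hasDerivAt_quotient :=
    (hf''.hasDerivAt.fun_div hf'.hasDerivAt hpos.ne').const_mul (-(1 / 2) : ℝ)
  refine (hasDerivAt_quotient.fun_mul (hasDerivAt_inv_sqrt hf'.hasDerivAt hpos)).congr_deriv ?_
  rw [schwarzian]
  field_simp
  ring

theorem hasDerivAt_osculatingMobius {f : ℝ → ℝ} {t₀ t : ℝ} (ht : osculatingDenom f t₀ t ≠ 0) :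
    HasDerivAt (osculatingMobius f t₀) (deriv f t₀ / osculatingDenom f t₀ t ^ 2) t := by
  have hasDerivAt_sub := (hasDerivAt_id' t).sub_const t₀
  have hasDerivAt_denom : HasDerivAt (osculatingDenom f t₀)
      (-(deriv (deriv f) t₀ / (2 * deriv f t₀) * 1)) t :=
    (hasDerivAt_sub.const_mul _).const_sub 1
  refine (((hasDerivAt_sub.const_mul (deriv f t₀)).fun_div hasDerivAt_denom ht).const_add
    (f t₀)).congr_deriv ?_
  rw [osculatingDenom]
  ring

section Antiderivative

variable {𝕜 E : Type*} [RCLike 𝕜] [NormedAddCommGroup E] [NormedSpace 𝕜 E]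
  {s : Set 𝕜} {t₀ t : 𝕜} {g g' : 𝕜 → E}

theorem eq_of_hasDerivAt_eq {h : 𝕜 → E} (hs : IsOpen s) (hs' : IsPreconnected s)
    (hg : ∀ x ∈ s, HasDerivAt g (g' x) x) (hh : ∀ x ∈ s, HasDerivAt h (g' x) x)
    (ht₀ : t₀ ∈ s) (h₀ : g t₀ = h t₀) (ht : t ∈ s) : g t = h t :=
  hs.eqOn_of_deriv_eq hs'
    (fun x hx ↦ (hg x hx).differentiableAt.differentiableWithinAt)
    (fun x hx ↦ (hh x hx).differentiableAt.differentiableWithinAt)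
    (fun x hx ↦ (hg x hx).deriv.trans (hh x hx).deriv.symm) ht₀ h₀ ht

theorem eq_add_smul_of_hasDerivAt_of_hasDerivAt_zero (hs : IsOpen s) (hs' : IsPreconnected s)
    (hg : ∀ x ∈ s, HasDerivAt g (g' x) x) (hg' : ∀ x ∈ s, HasDerivAt g' 0 x)
    (ht₀ : t₀ ∈ s) (ht : t ∈ s) : g t = g t₀ + (t - t₀) • g' t₀ := by
  have slope_const : ∀ x ∈ s, g' x = g' t₀ := fun x hx ↦
    eq_of_hasDerivAt_eq hs hs' hg' (fun y _ ↦ hasDerivAt_const y (g' t₀)) ht₀ rfl hx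
  refine eq_of_hasDerivAt_eq (h := fun x ↦ g t₀ + (x - t₀) • g' t₀) hs hs' hg (fun x hx ↦ ?_)
    ht₀ (by simp) ht
  simpa [slope_const x hx] using
    (((hasDerivAt_id x).sub_const t₀).smul_const (g' t₀)).const_add (g t₀)

end Antiderivative

section SchwarzianEqZero

variable {f : ℝ → ℝ} {s : Set ℝ} {t₀ t : ℝ}

theorem inv_sqrt_deriv_eq_of_schwarzian_eq_zero (hs : IsOpen s) (hs' : IsPreconnected s)
    (hf' : DifferentiableOn ℝ (deriv f) s) (hf'' : DifferentiableOn ℝ (deriv (deriv f)) s)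
    (hpos : ∀ x ∈ s, 0 < deriv f x) (hS : ∀ x ∈ s, schwarzian f x = 0)
    (ht₀ : t₀ ∈ s) (ht : t ∈ s) :
    (√(deriv f t))⁻¹ = (√(deriv f t₀))⁻¹ * osculatingDenom f t₀ t := by
  have differentiableAt_deriv : ∀ x ∈ s, DifferentiableAt ℝ (deriv f) x := fun x hx ↦
    hf'.differentiableAt (hs.mem_nhds hx)
  have affine := eq_add_smul_of_hasDerivAt_of_hasDerivAt_zero hs hs'
    (fun x hx ↦ hasDerivAt_inv_sqrt (differentiableAt_deriv x hx).hasDerivAt (hpos x hx))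
    (fun x hx ↦ by
      simpa [hS x hx] using hasDerivAt_deriv_inv_sqrt_deriv (differentiableAt_deriv x hx)
        (hf''.differentiableAt (hs.mem_nhds hx)) (hpos x hx)) ht₀ ht
  rw [affine, smul_eq_mul, osculatingDenom]
  ring

theorem osculatingDenom_pos_of_schwarzian_eq_zero (hs : IsOpen s) (hs' : IsPreconnected s)
    (hf' : DifferentiableOn ℝ (deriv f) s) (hf'' : DifferentiableOn ℝ (deriv (deriv f)) s)
    (hpos : ∀ x ∈ s, 0 < deriv f x) (hS : ∀ x ∈ s, schwarzian f x = 0)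
    (ht₀ : t₀ ∈ s) (ht : t ∈ s) : 0 < osculatingDenom f t₀ t := by
  have inv_sqrt_pos : ∀ x ∈ s, 0 < (√(deriv f x))⁻¹ := fun x hx ↦
    inv_pos.2 (Real.sqrt_pos.2 (hpos x hx))
  rw [← mul_pos_iff_of_pos_left (inv_sqrt_pos t₀ ht₀),
    ← inv_sqrt_deriv_eq_of_schwarzian_eq_zero hs hs' hf' hf'' hpos hS ht₀ ht]
  exact inv_sqrt_pos t ht

theorem deriv_eq_of_schwarzian_eq_zero (hs : IsOpen s) (hs' : IsPreconnected s)
    (hf' : DifferentiableOn ℝ (deriv f) s) (hf'' : DifferentiableOn ℝ (deriv (deriv f)) s)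
    (hpos : ∀ x ∈ s, 0 < deriv f x) (hS : ∀ x ∈ s, schwarzian f x = 0)
    (ht₀ : t₀ ∈ s) (ht : t ∈ s) : deriv f t = deriv f t₀ / osculatingDenom f t₀ t ^ 2 := by
  have eq_inv_sqrt_pow : ∀ x ∈ s, deriv f x = ((√(deriv f x))⁻¹ ^ 2)⁻¹ := fun x hx ↦ by
    rw [inv_pow, inv_inv, Real.sq_sqrt (hpos x hx).le]
  calc deriv f t = ((√(deriv f t))⁻¹ ^ 2)⁻¹ := eq_inv_sqrt_pow t ht
    _ = (((√(deriv f t₀))⁻¹ * osculatingDenom f t₀ t) ^ 2)⁻¹ := by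
      rw [inv_sqrt_deriv_eq_of_schwarzian_eq_zero hs hs' hf' hf'' hpos hS ht₀ ht]
    _ = ((√(deriv f t₀))⁻¹ ^ 2)⁻¹ / osculatingDenom f t₀ t ^ 2 := by
      rw [mul_pow, mul_inv, div_eq_mul_inv]
    _ = deriv f t₀ / osculatingDenom f t₀ t ^ 2 := by rw [← eq_inv_sqrt_pow t₀ ht₀]

theorem eq_osculatingMobius_of_schwarzian_eq_zero (hs : IsOpen s) (hs' : IsPreconnected s)
    (hf' : DifferentiableOn ℝ (deriv f) s) (hf'' : DifferentiableOn ℝ (deriv (deriv f)) s)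
    (hpos : ∀ x ∈ s, 0 < deriv f x) (hS : ∀ x ∈ s, schwarzian f x = 0)
    (ht₀ : t₀ ∈ s) (ht : t ∈ s) : f t = osculatingMobius f t₀ t := by
  refine eq_of_hasDerivAt_eq hs hs'
    (fun x hx ↦ (differentiableAt_of_deriv_ne_zero (hpos x hx).ne').hasDerivAt) (fun x hx ↦ ?_)
    ht₀ (by simp [osculatingMobius]) ht
  rw [deriv_eq_of_schwarzian_eq_zero hs hs' hf' hf'' hpos hS ht₀ hx]
  exact hasDerivAt_osculatingMobius
    (osculatingDenom_pos_of_schwarzian_eq_zero hs hs' hf' hf'' hpos hS ht₀ hx).ne'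

end SchwarzianEqZero

theorem nonneg_of_forall_one_add_mul_pos {𝕜 : Type*} [Field 𝕜] [LinearOrder 𝕜]
    [IsStrictOrderedRing 𝕜] {k : 𝕜} (h : ∀ t, 0 ≤ t → 0 < 1 + k * t) : 0 ≤ k := by
  by_contra! hk
  have at_root := h (-k⁻¹) (neg_nonneg.2 (inv_lt_zero.2 hk).le)
  simp [hk.ne] at at_root

theorem eq_id_or_eq_mul_div_add_of_eq_div_one_add_mul {𝕜 : Type*} [Field 𝕜] [LinearOrder 𝕜]
    [IsStrictOrderedRing 𝕜] {k : 𝕜} {f : 𝕜 → 𝕜} (hk : 0 ≤ k)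
    (hf : ∀ t, 0 ≤ t → f t = t / (1 + k * t)) :
    (∀ t, 0 ≤ t → f t = t) ∨ ∃ c, 0 < c ∧ ∀ t, 0 ≤ t → f t = c * t / (c + t) := by
  rcases hk.eq_or_lt with rfl | hk
  · exact .inl fun t ht ↦ by simp [hf t ht]
  · refine .inr ⟨k⁻¹, inv_pos.2 hk, fun t ht ↦ ?_⟩
    rw [hf t ht]
    field_simp

/-- Classification of solutions of the geodesic ODE
`2f‴f′ − 3(f″)² = 0` with `f(0) = 0`, `f′(0) = 1` and `f′ > 0` on `(a, ∞)` (where `a < 0`):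
on `[0, ∞)` either `f(t) = t`, or `f(t) = c·t/(c + t)` for some constant `c > 0`. -/
theorem stmt_9 (a : ℝ) (ha : a < 0) (f : ℝ → ℝ)
    (hf : ContDiffOn ℝ 3 f (Set.Ioi a))
    (hf0 : f 0 = 0) (hf'0 : deriv f 0 = 1)
    (hf'pos : ∀ t ∈ Set.Ioi a, 0 < deriv f t)
    (hode : ∀ t ∈ Set.Ioi a,
      2 * deriv (deriv (deriv f)) t * deriv f t - 3 * (deriv (deriv f) t) ^ 2 = 0) :
    (∀ t : ℝ, 0 ≤ t → f t = t) ∨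
      ∃ c : ℝ, 0 < c ∧ ∀ t : ℝ, 0 ≤ t → f t = c * t / (c + t) := by
  have contDiffOn_deriv : ContDiffOn ℝ 2 (deriv f) (Set.Ioi a) :=
    hf.deriv_of_isOpen isOpen_Ioi (by norm_num)
  have hf' := contDiffOn_deriv.differentiableOn two_ne_zero
  have hf'' : DifferentiableOn ℝ (deriv (deriv f)) (Set.Ioi a) :=
    (contDiffOn_deriv.deriv_of_isOpen (m := 1) isOpen_Ioi (by norm_num)).differentiableOn
      one_ne_zero
  have hS : ∀ t ∈ Set.Ioi a, schwarzian f t = 0 := fun t ht ↦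
    (schwarzian_eq_zero_iff (hf'pos t ht).ne').2 (hode t ht)
  have denom_eq (t : ℝ) : osculatingDenom f 0 t = 1 + -(deriv (deriv f) 0 / 2) * t := by
    rw [osculatingDenom, hf'0]
    ring
  refine eq_id_or_eq_mul_div_add_of_eq_div_one_add_mul (k := -(deriv (deriv f) 0 / 2))
    (nonneg_of_forall_one_add_mul_pos fun t ht ↦ ?_) fun t ht ↦ ?_
  · rw [← denom_eq]
    exact osculatingDenom_pos_of_schwarzian_eq_zero isOpen_Ioi isPreconnected_Ioi hf' hf'' hf'pos
      hS ha (ha.trans_le ht)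
  · rw [eq_osculatingMobius_of_schwarzian_eq_zero isOpen_Ioi isPreconnected_Ioi hf' hf'' hf'pos
      hS ha (ha.trans_le ht), osculatingMobius, denom_eq, hf0, hf'0, sub_zero, one_mul, zero_add]
end

section
/- Let J ⊆ ℝ be an open interval containing 0 and let f : ℝ → ℝ be three times continuously differentiable on J, with f(0) = 0, f′(0) = 1, f′(t) > 0 for all t ∈ J, and 2·f′′′(t)·f′(t) − 3·f′′(t)² = 4·f′(t)² for all t ∈ J. Then there exists c ∈ (−π/2, π/2) such that J ⊆ (−π/2 − c, π/2 − c) and f(t) = cos²(c)·(tan(t + c) − tan(c)) for all t ∈ J. -/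
open Real

/-!
Put `p = f'`. The equation `2 f''' f' - 3 f''² = 4 κ² f'²` says that `f` has Schwarzian derivative
`2 κ²`, and it is of first order in the logarithmic derivative of `p`: `u = p' / (2 κ p)` solves the
Riccati equation `u' = κ (1 + u²)`. Hence `φ = arctan u` is affine of slope `κ`, and since `arctan`
takes values in `(-π/2, π/2)` this already bounds the interval. Now `p' = 2 φ' tan φ · p` says that
`p cos² φ` is constant, and as `tan' = 1 / cos²` a last integration shows that `f` is an affine
function of `tan φ`.
-/

theorem eq_of_hasDerivAt_zero {𝕜 E : Type*} [RCLike 𝕜] [NormedAddCommGroup E] [NormedSpace 𝕜 E]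
    {s : Set 𝕜} {g : 𝕜 → E} {x y : 𝕜} (hs : IsOpen s) (hsc : IsPreconnected s)
    (hg : ∀ z ∈ s, HasDerivAt g 0 z) (hx : x ∈ s) (hy : y ∈ s) : g x = g y :=
  hs.is_const_of_deriv_eq_zero hsc
    (fun z hz ↦ (hg z hz).differentiableAt.differentiableWithinAt)
    (fun z hz ↦ (hg z hz).deriv) hx hy

theorem hasDerivAt_logDeriv {𝕜 : Type*} [NontriviallyNormedField 𝕜] {p : 𝕜 → 𝕜} {t : 𝕜}
    (hp : DifferentiableAt 𝕜 p t) (hp' : DifferentiableAt 𝕜 (deriv p) t) (hpt : p t ≠ 0) :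
    HasDerivAt (logDeriv p) (deriv (deriv p) t / p t - logDeriv p t ^ 2) t := by
  refine (hp'.hasDerivAt.div hp.hasDerivAt hpt).congr_deriv ?_
  rw [logDeriv_apply]
  field

theorem differentiableAt_deriv_of_schwarzian_eq {p : ℝ → ℝ} {κ t : ℝ} (hκ : κ ≠ 0) (hpt : p t ≠ 0)
    (hode : 2 * deriv (deriv p) t * p t - 3 * deriv p t ^ 2 = 4 * κ ^ 2 * p t ^ 2) :
    DifferentiableAt ℝ (deriv p) t := by
  -- `deriv` vanishes where it is undefined, but here the equation forces `p'' ≠ 0`.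
  refine differentiableAt_of_deriv_ne_zero fun hp'' ↦ ?_
  have hpos : 0 < 4 * κ ^ 2 * p t ^ 2 := by positivity
  rw [hp''] at hode
  linarith [sq_nonneg (deriv p t)]

theorem hasDerivAt_riccati_of_schwarzian_eq {p : ℝ → ℝ} {κ t : ℝ} (hκ : κ ≠ 0)
    (hp : DifferentiableAt ℝ p t) (hpt : p t ≠ 0)
    (hode : 2 * deriv (deriv p) t * p t - 3 * deriv p t ^ 2 = 4 * κ ^ 2 * p t ^ 2) :
    HasDerivAt (fun s ↦ logDeriv p s / (2 * κ)) (κ * (1 + (logDeriv p t / (2 * κ)) ^ 2)) t := by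
  have hp' := differentiableAt_deriv_of_schwarzian_eq hκ hpt hode
  refine ((hasDerivAt_logDeriv hp hp' hpt).div_const (2 * κ)).congr_deriv ?_
  rw [logDeriv_apply]
  field_simp
  linear_combination hode

section Integration

variable {J : Set ℝ} {t₀ t : ℝ}

theorem arctan_eq_of_hasDerivAt_riccati {u : ℝ → ℝ} {κ : ℝ} (hJ : IsOpen J)
    (hJc : IsPreconnected J) (hu : ∀ s ∈ J, HasDerivAt u (κ * (1 + u s ^ 2)) s)
    (ht₀ : t₀ ∈ J) (ht : t ∈ J) :
    arctan (u t) = κ * (t - t₀) + arctan (u t₀) := by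
  have hderiv : ∀ s ∈ J, HasDerivAt (fun s ↦ arctan (u s) - κ * s) 0 s := by
    intro s hs
    refine ((hu s hs).arctan.sub ((hasDerivAt_id s).const_mul κ)).congr_deriv ?_
    have : 1 + u s ^ 2 ≠ 0 := by positivity
    field
  linear_combination eq_of_hasDerivAt_zero hJ hJc hderiv ht ht₀

theorem mul_cos_sq_eq_of_deriv_eq_tan_mul {p φ : ℝ → ℝ} (hJ : IsOpen J) (hJc : IsPreconnected J)
    (hp : DifferentiableOn ℝ p J) (hφ : DifferentiableOn ℝ φ J) (hcos : ∀ s ∈ J, cos (φ s) ≠ 0)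
    (hp' : ∀ s ∈ J, deriv p s = 2 * deriv φ s * tan (φ s) * p s) (ht₀ : t₀ ∈ J) (ht : t ∈ J) :
    p t * cos (φ t) ^ 2 = p t₀ * cos (φ t₀) ^ 2 := by
  have hderiv : ∀ s ∈ J, HasDerivAt (fun s ↦ p s * cos (φ s) ^ 2) 0 s := by
    intro s hs
    have hps := (hp.differentiableAt (hJ.mem_nhds hs)).hasDerivAt
    have hφs := (hφ.differentiableAt (hJ.mem_nhds hs)).hasDerivAt
    refine (hps.mul (hφs.cos.pow 2)).congr_deriv ?_
    rw [hp' s hs, Pi.pow_apply]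
    linear_combination 2 * deriv φ s * p s * cos (φ s) * tan_mul_cos (hcos s hs)
  exact eq_of_hasDerivAt_zero hJ hJc hderiv ht ht₀

theorem eq_add_mul_tan_sub_tan_of_deriv_mul_cos_sq_eq {f φ : ℝ → ℝ} {A : ℝ} (hJ : IsOpen J)
    (hJc : IsPreconnected J) (hf : DifferentiableOn ℝ f J) (hφ : DifferentiableOn ℝ φ J)
    (hcos : ∀ s ∈ J, cos (φ s) ≠ 0)
    (hf' : ∀ s ∈ J, deriv f s * cos (φ s) ^ 2 = A * deriv φ s) (ht₀ : t₀ ∈ J) (ht : t ∈ J) :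
    f t = f t₀ + A * (tan (φ t) - tan (φ t₀)) := by
  have hderiv : ∀ s ∈ J, HasDerivAt (fun s ↦ f s - A * tan (φ s)) 0 s := by
    intro s hs
    have hfs := (hf.differentiableAt (hJ.mem_nhds hs)).hasDerivAt
    have hφs := (hφ.differentiableAt (hJ.mem_nhds hs)).hasDerivAt
    have htan := (hasDerivAt_tan (hcos s hs)).comp s hφs
    refine (hfs.sub (htan.const_mul A)).congr_deriv ?_
    have := hcos s hs
    field_simp
    linear_combination hf' s hs
  linear_combination eq_of_hasDerivAt_zero hJ hJc hderiv ht ht₀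

theorem exists_phase_of_schwarzian_eq {p : ℝ → ℝ} {κ : ℝ} (hJ : IsOpen J) (hJc : IsPreconnected J)
    (ht₀ : t₀ ∈ J) (hκ : κ ≠ 0) (hp : DifferentiableOn ℝ p J) (hp₀ : ∀ s ∈ J, p s ≠ 0)
    (hode : ∀ s ∈ J,
      2 * deriv (deriv p) s * p s - 3 * deriv p s ^ 2 = 4 * κ ^ 2 * p s ^ 2) :
    ∃ c ∈ Set.Ioo (-(π / 2)) (π / 2), ∀ s ∈ J,
      κ * (s - t₀) + c ∈ Set.Ioo (-(π / 2)) (π / 2) ∧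
      deriv p s = 2 * κ * tan (κ * (s - t₀) + c) * p s := by
  let u : ℝ → ℝ := fun s ↦ logDeriv p s / (2 * κ)
  have arctan_u : ∀ s ∈ J, arctan (u s) = κ * (s - t₀) + arctan (u t₀) := fun s hs ↦
    arctan_eq_of_hasDerivAt_riccati hJ hJc (fun r hr ↦ hasDerivAt_riccati_of_schwarzian_eq hκ
      (hp.differentiableAt (hJ.mem_nhds hr)) (hp₀ r hr) (hode r hr)) ht₀ hs
  refine ⟨arctan (u t₀), arctan_mem_Ioo _, fun s hs ↦ ?_⟩
  rw [← arctan_u s hs, tan_arctan]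
  refine ⟨arctan_mem_Ioo _, ?_⟩
  have := hp₀ s hs
  simp only [u, logDeriv_apply]
  field

end Integration

theorem stmt_11_general {J : Set ℝ} (hJ : IsOpen J) (hJc : IsPreconnected J) {t₀ κ : ℝ}
    (ht₀ : t₀ ∈ J) (hκ : κ ≠ 0) {f : ℝ → ℝ} (hf : DifferentiableOn ℝ (deriv f) J)
    (hf' : ∀ t ∈ J, deriv f t ≠ 0)
    (hode : ∀ t ∈ J, 2 * deriv (deriv (deriv f)) t * deriv f t - 3 * deriv (deriv f) t ^ 2
      = 4 * κ ^ 2 * deriv f t ^ 2) :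
    ∃ c ∈ Set.Ioo (-(π / 2)) (π / 2), ∀ t ∈ J,
      κ * (t - t₀) + c ∈ Set.Ioo (-(π / 2)) (π / 2) ∧
      f t = f t₀ + deriv f t₀ * cos c ^ 2 / κ * (tan (κ * (t - t₀) + c) - tan c) := by
  obtain ⟨c, hc, hphase⟩ := exists_phase_of_schwarzian_eq hJ hJc ht₀ hκ hf hf' hode
  refine ⟨c, hc, fun t ht ↦ ⟨(hphase t ht).1, ?_⟩⟩
  let φ : ℝ → ℝ := fun s ↦ κ * (s - t₀) + c
  have hφ₀ : φ t₀ = c := by simp [φ]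
  have hφ : DifferentiableOn ℝ φ J := by fun_prop
  have hφ' (s : ℝ) : deriv φ s = κ := by simp [φ]
  have hcos : ∀ s ∈ J, cos (φ s) ≠ 0 := fun s hs ↦ (cos_pos_of_mem_Ioo (hphase s hs).1).ne'
  have deriv_mul_cos_sq : ∀ s ∈ J,
      deriv f s * cos (φ s) ^ 2 = deriv f t₀ * cos c ^ 2 / κ * deriv φ s := by
    intro s hs
    rw [hφ', div_mul_cancel₀ _ hκ, ← hφ₀]
    exact mul_cos_sq_eq_of_deriv_eq_tan_mul hJ hJc hf hφ hcos
      (fun r hr ↦ by rw [hφ', (hphase r hr).2]) ht₀ hs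
  have hfd : DifferentiableOn ℝ f J := fun s hs ↦
    (differentiableAt_of_deriv_ne_zero (hf' s hs)).differentiableWithinAt
  simpa only [hφ₀] using
    eq_add_mul_tan_sub_tan_of_deriv_mul_cos_sq_eq hJ hJc hfd hφ hcos deriv_mul_cos_sq ht₀ ht

/-- Classification of solutions of the geodesic ODE
`2f‴f′ − 3(f″)² = 4(f′)²` with `f(0) = 0`, `f′(0) = 1` and `f′ > 0` on an open interval
`J = (a, b)` containing `0`: there is `c ∈ (−π/2, π/2)` with
`J ⊆ (−π/2 − c, π/2 − c)` and `f(t) = cos²(c)·(tan(t + c) − tan(c))` on `J`. -/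
theorem stmt_11 (a b : ℝ) (ha : a < 0) (hb : 0 < b) (f : ℝ → ℝ)
    (hf : ContDiffOn ℝ 3 f (Set.Ioo a b))
    (hf0 : f 0 = 0) (hf'0 : deriv f 0 = 1)
    (hf'pos : ∀ t ∈ Set.Ioo a b, 0 < deriv f t)
    (hode : ∀ t ∈ Set.Ioo a b,
      2 * deriv (deriv (deriv f)) t * deriv f t - 3 * (deriv (deriv f) t) ^ 2
        = 4 * (deriv f t) ^ 2) :
    ∃ c : ℝ, c ∈ Set.Ioo (-(π / 2)) (π / 2) ∧
      Set.Ioo a b ⊆ Set.Ioo (-(π / 2) - c) (π / 2 - c) ∧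
      ∀ t ∈ Set.Ioo a b, f t = Real.cos c ^ 2 * (Real.tan (t + c) - Real.tan c) := by
  have hf'' : DifferentiableOn ℝ (deriv f) (Set.Ioo a b) :=
    (hf.deriv_of_isOpen (m := 2) isOpen_Ioo (by norm_num)).differentiableOn (by norm_num)
  obtain ⟨c, hc, h⟩ := stmt_11_general isOpen_Ioo isPreconnected_Ioo ⟨ha, hb⟩ one_ne_zero hf''
    (fun t ht ↦ (hf'pos t ht).ne') (by simpa using hode)
  simp only [hf0, hf'0, one_mul, sub_zero, div_one, zero_add] at h
  exact ⟨c, hc, fun t ht ↦ ⟨by linarith [(h t ht).1.1], by linarith [(h t ht).1.2]⟩,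
    fun t ht ↦ (h t ht).2⟩
end

section
/- Let n ≥ 1 and define p : ℝⁿ → ℝⁿ × ℝ by p(x) := (1 + ‖x‖²)^{−1/2} • (x, 1), where ℝⁿ × ℝ carries the Euclidean norm ‖(z,s)‖ = √(‖z‖² + s²). Then for every a, b ∈ ℝⁿ with b ≠ 0 there exists a linear subspace Π ⊆ ℝⁿ × ℝ of dimension 2 such that the image p '' {a + t•b : t ∈ ℝ} equals {w ∈ Π : ‖w‖ = 1 and the last (ℝ-)coordinate of w is positive}. In other words, the image under p of any affine line in ℝⁿ is the open upper half of a great circle of the unit sphere in ℝⁿ × ℝ ≅ ℝ^{n+1}. -/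
/-!
The map `p` is inverse to the gnomonic projection `(z, s) ↦ s⁻¹ • z` of the open upper hemisphere.
Hence the image of a set under `p` consists of the points of the hemisphere whose gnomonic
projection lies in the set. A vector off the hyperplane `s = 0` projects into the line `a + ℝ b`
exactly when it lies in the span of `(a, 1)` and `(b, 0)`, which is the plane through the origin
containing the copy of the line at height `1`.
-/

section LinearAlgebra

variable {K V : Type*} [DivisionRing K] [AddCommGroup V] [Module K V]

theorem linearIndependent_pair_mk_one_mk_zero (a : V) {b : V} (hb : b ≠ 0) :
    LinearIndependent K ![((a, 1) : V × K), (b, 0)] := by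
  rw [LinearIndependent.pair_iff]
  intro s t h
  obtain ⟨hfst, hsnd⟩ := Prod.ext_iff.mp h
  obtain rfl : s = 0 := by simpa using hsnd
  exact ⟨rfl, by simpa [hb] using hfst⟩

theorem finrank_span_pair_mk_one_mk_zero (a : V) {b : V} (hb : b ≠ 0) :
    Module.finrank K (Submodule.span K {((a, 1) : V × K), (b, 0)}) = 2 := by
  rw [← Matrix.range_cons_cons_empty _ _ ![],
    finrank_span_eq_card (linearIndependent_pair_mk_one_mk_zero a hb), Fintype.card_fin]

theorem mem_span_pair_mk_one_mk_zero_iff (a b : V) {w : V × K} (hw : w.2 ≠ 0) :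
    w ∈ Submodule.span K {((a, 1) : V × K), (b, 0)} ↔ ∃ t : K, w.2⁻¹ • w.1 = a + t • b := by
  obtain ⟨z, s⟩ := w
  rw [Submodule.mem_span_pair]
  constructor
  · rintro ⟨r, t, h⟩
    obtain ⟨hfst, hsnd⟩ := Prod.ext_iff.mp h
    obtain rfl : r = s := by simpa using hsnd
    obtain rfl : r • a + t • b = z := hfst
    exact ⟨r⁻¹ * t, by rw [smul_add, inv_smul_smul₀ hw, mul_smul]⟩
  · rintro ⟨t, h⟩
    obtain rfl : z = s • (a + t • b) := (inv_smul_eq_iff₀ hw).mp h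
    exact ⟨s, s * t, by simp [smul_add, mul_smul]⟩

end LinearAlgebra

section Gnomonic

variable {E : Type*} [SeminormedAddCommGroup E]

variable (E) in
/-- The open upper half of the unit sphere of `E × ℝ`. The `ℓ²`-product norm is written out, since
the norm Mathlib puts on `E × ℝ` is the sup norm. -/
def openUpperHemisphere : Set (E × ℝ) :=
  {w | ‖w.1‖ ^ 2 + w.2 ^ 2 = 1 ∧ 0 < w.2}

variable [NormedSpace ℝ E]

/-- The gnomonic projection, taking `w` to the `E`-coordinate of the point at height `1` on the
line through the origin and `w`. It takes the junk value `0` at height `0`. -/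
noncomputable def gnomonicProjection (w : E × ℝ) : E :=
  w.2⁻¹ • w.1

/-- The map `p` of the statement, over an arbitrary real seminormed space: the radial projection of
`(x, 1)` to the open upper hemisphere. -/
noncomputable def hemisphereLift (x : E) : E × ℝ :=
  (Real.sqrt (1 + ‖x‖ ^ 2))⁻¹ • (x, 1)

theorem hemisphereLift_mem_openUpperHemisphere (x : E) :
    hemisphereLift x ∈ openUpperHemisphere E := by
  have hpos : 0 < 1 + ‖x‖ ^ 2 := by positivity
  refine ⟨?_, by simpa [hemisphereLift] using hpos⟩
  calc ‖(hemisphereLift x).1‖ ^ 2 + (hemisphereLift x).2 ^ 2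
      = (Real.sqrt (1 + ‖x‖ ^ 2) ^ 2)⁻¹ * (1 + ‖x‖ ^ 2) := by
        simp only [hemisphereLift, Prod.smul_mk, norm_smul, smul_eq_mul, mul_one, mul_pow,
          Real.norm_eq_abs, sq_abs, inv_pow]
        ring
    _ = 1 := by rw [Real.sq_sqrt hpos.le, inv_mul_cancel₀ hpos.ne']

theorem gnomonicProjection_hemisphereLift (x : E) :
    gnomonicProjection (hemisphereLift x) = x := by
  have hsqrt : Real.sqrt (1 + ‖x‖ ^ 2) ≠ 0 := by positivity
  simp [gnomonicProjection, hemisphereLift, smul_smul, hsqrt]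

theorem sqrt_one_add_norm_gnomonicProjection_sq {w : E × ℝ} (hw : w ∈ openUpperHemisphere E) :
    Real.sqrt (1 + ‖gnomonicProjection w‖ ^ 2) = w.2⁻¹ := by
  obtain ⟨hunit, hpos⟩ := hw
  have hsq : 1 + ‖gnomonicProjection w‖ ^ 2 = w.2⁻¹ ^ 2 := by
    rw [gnomonicProjection, norm_smul, mul_pow, Real.norm_eq_abs, sq_abs]
    field_simp
    linarith
  rw [hsq, Real.sqrt_sq (inv_pos.mpr hpos).le]

theorem hemisphereLift_gnomonicProjection {w : E × ℝ} (hw : w ∈ openUpperHemisphere E) :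
    hemisphereLift (gnomonicProjection w) = w := by
  have hne : w.2 ≠ 0 := hw.2.ne'
  rw [hemisphereLift, sqrt_one_add_norm_gnomonicProjection_sq hw, inv_inv]
  ext1 <;> simp [gnomonicProjection, hne]

theorem mem_hemisphereLift_image_iff {s : Set E} {w : E × ℝ} :
    w ∈ hemisphereLift '' s ↔ gnomonicProjection w ∈ s ∧ w ∈ openUpperHemisphere E := by
  constructor
  · rintro ⟨x, hx, rfl⟩
    exact ⟨(gnomonicProjection_hemisphereLift x).symm ▸ hx,
      hemisphereLift_mem_openUpperHemisphere x⟩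
  · rintro ⟨hproj, hw⟩
    exact ⟨gnomonicProjection w, hproj, hemisphereLift_gnomonicProjection hw⟩

theorem stmt_12_general (a : E) {b : E} (hb : b ≠ 0) :
    ∃ P : Submodule ℝ (E × ℝ),
      Module.finrank ℝ P = 2 ∧
      (fun x : E => (Real.sqrt (1 + ‖x‖ ^ 2))⁻¹ • ((x, 1) : E × ℝ)) ''
        {z | ∃ t : ℝ, z = a + t • b} =
      {w : E × ℝ | w ∈ P ∧ ‖w.1‖ ^ 2 + w.2 ^ 2 = 1 ∧ 0 < w.2} := by
  refine ⟨Submodule.span ℝ {(a, 1), (b, 0)}, finrank_span_pair_mk_one_mk_zero a hb, ?_⟩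
  ext w
  calc w ∈ hemisphereLift '' {z | ∃ t : ℝ, z = a + t • b}
      ↔ (∃ t : ℝ, gnomonicProjection w = a + t • b) ∧ w ∈ openUpperHemisphere E :=
        mem_hemisphereLift_image_iff
    _ ↔ w ∈ Submodule.span ℝ {(a, 1), (b, 0)} ∧ w ∈ openUpperHemisphere E :=
        and_congr_left fun hw => (mem_span_pair_mk_one_mk_zero_iff a b hw.2.ne').symm

end Gnomonic

/-- The image, under the map `p(x) = (x,1)/√(1+‖x‖²)` from `ℝⁿ` to the
upper hemisphere of the unit sphere of `ℝⁿ × ℝ ≅ ℝ^{n+1}`, of any affine line is the open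
upper half of a great circle: the set of unit vectors with positive last coordinate in a
2-dimensional linear subspace. -/
theorem stmt_12 (n : ℕ) (hn : 1 ≤ n)
    (a b : EuclideanSpace ℝ (Fin n)) (hb : b ≠ 0) :
    ∃ P : Submodule ℝ (EuclideanSpace ℝ (Fin n) × ℝ),
      Module.finrank ℝ P = 2 ∧
      (fun x : EuclideanSpace ℝ (Fin n) =>
          (Real.sqrt (1 + ‖x‖ ^ 2))⁻¹ • ((x, 1) : EuclideanSpace ℝ (Fin n) × ℝ)) ''
        {z | ∃ t : ℝ, z = a + t • b} =
      {w : EuclideanSpace ℝ (Fin n) × ℝ | w ∈ P ∧ ‖w.1‖ ^ 2 + w.2 ^ 2 = 1 ∧ 0 < w.2} :=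
  stmt_12_general a hb
end
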